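/- For any type V with a binary relation ∈ on V, if x is an upper and y is a predecessor of x, then x and y constitute an upper descending link: y ∈ x, x ≠ y, and both x and y are uppers. -/

import Mathlib

section Membership

variable {V : Type*} {mem : V → V → Prop} {x y : V}

/-- An upper: an element containing everything that is not a member of itself.
Here `mem z x` stands for `z ∈ x`. -/
def IsUpper (mem : V → V → Prop) (x : V) : Prop :=
  ∀ z, ¬ mem z z → mem z x

/-- `IsPredecessor mem y x`: the element `y` is a predecessor of `x`, that is, its members are
those of `x` apart from `x` itself. Predecessors need not exist, nor be unique since `mem` is not
assumed extensional, so this is a relation rather than an operation. -/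
def IsPredecessor (mem : V → V → Prop) (y x : V) : Prop :=
  ∀ z, mem z y ↔ (mem z x ∧ z ≠ x)

theorem IsUpper.mem_of_subset (hx : IsUpper mem x) (hyx : ∀ z, mem z y → mem z x) : mem y x := by
  by_cases hyy : mem y y
  · exact hyx y hyy
  · exact hx y hyy

theorem IsUpper.mem_self (hx : IsUpper mem x) : mem x x :=
  hx.mem_of_subset fun _ hz => hz

theorem IsPredecessor.subset (hy : IsPredecessor mem y x) (z : V) (hz : mem z y) : mem z x :=
  ((hy z).1 hz).1

theorem IsPredecessor.notMem (hy : IsPredecessor mem y x) : ¬ mem x y :=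
  fun hxy => ((hy x).1 hxy).2 rfl

theorem IsPredecessor.ne_of_mem_self (hy : IsPredecessor mem y x) (hxx : mem x x) : x ≠ y := by
  rintro rfl
  exact hy.notMem hxx

theorem IsPredecessor.isUpper (hy : IsPredecessor mem y x) (hx : IsUpper mem x) :
    IsUpper mem y := by
  intro z hzz
  have hzx : z ≠ x := by
    rintro rfl
    exact hzz hx.mem_self
  exact (hy z).2 ⟨hx z hzz, hzx⟩

end Membership

theorem upper_descending_link {V : Type*} (mem : V → V → Prop) (x y : V)
    (hx : ∀ z, ¬ mem z z → mem z x)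
    (hy : ∀ z, mem z y ↔ (mem z x ∧ z ≠ x)) :
    mem y x ∧ x ≠ y ∧ (∀ z, ¬ mem z z → mem z x) ∧ (∀ z, ¬ mem z z → mem z y) := by
  have x_upper : IsUpper mem x := hx
  have y_pred : IsPredecessor mem y x := hy
  exact ⟨x_upper.mem_of_subset y_pred.subset, y_pred.ne_of_mem_self x_upper.mem_self,
    x_upper, y_pred.isUpper x_upper⟩
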